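/- arXiv:1605.00824 — 2 statements merged into one kernel-verified Lean document; each statement's English description precedes it below -/
import Mathlib

section
/- Let d ≥ 2 be a natural number and let f : ℝ^d → ℂ be a continuous function. Let R_f be the ℂ-linear span of the set of functions {x ↦ f(L x) : L is a surjective isometry of ℝ^d}. Then f is an ordinary polynomial if and only if R_f is a finite-dimensional ℂ-vector space. -/
namespace Loewner

/-- translation operator -/
noncomputable def T {d : ℕ} (h : EuclideanSpace ℝ (Fin d)) :
    Module.End ℂ (EuclideanSpace ℝ (Fin d) → ℂ) :=
  LinearMap.funLeft ℂ ℂ (fun x => x + h)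

theorem T_apply {d : ℕ} (h : EuclideanSpace ℝ (Fin d)) (g : EuclideanSpace ℝ (Fin d) → ℂ)
    (x : EuclideanSpace ℝ (Fin d)) : T h g x = g (x + h) := rfl

theorem T_pow_apply {d : ℕ} (h : EuclideanSpace ℝ (Fin d)) (n : ℕ)
    (g : EuclideanSpace ℝ (Fin d) → ℂ)
    (x : EuclideanSpace ℝ (Fin d)) : (T h ^ n) g x = g (x + (n : ℝ) • h) := by
  induction n generalizing x with
  | zero => simp
  | succ n ih =>
    rw [pow_succ', Module.End.mul_apply, T_apply, ih]
    congr 1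
    push_cast
    rw [add_smul, one_smul]; abel

/-- joint eigenvectors -/
def EV {d : ℕ} (V : Submodule ℂ (EuclideanSpace ℝ (Fin d) → ℂ))
    (h : EuclideanSpace ℝ (Fin d)) (μ : ℂ) : Prop :=
  ∃ g ∈ V, g ≠ 0 ∧ ∀ x, g (x + h) = μ * g x

theorem EV_joint {d : ℕ} (V : Submodule ℂ (EuclideanSpace ℝ (Fin d) → ℂ))
    [FiniteDimensional ℂ V] (hV : ∀ h, ∀ g ∈ V, T h g ∈ V)
    {h : EuclideanSpace ℝ (Fin d)} {μ : ℂ} (hμ : EV V h μ) (u : EuclideanSpace ℝ (Fin d)) :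
    ∃ α, ∃ g ∈ V, g ≠ 0 ∧ (∀ x, g (x + h) = μ * g x) ∧ ∀ x, g (x + u) = α * g x := by
  obtain ⟨g₀, hg₀, hne, hg₀e⟩ := hμ
  let W : Submodule ℂ (EuclideanSpace ℝ (Fin d) → ℂ) := V ⊓ LinearMap.ker (T h - μ • 1)
  have hW : ∀ g, g ∈ W ↔ g ∈ V ∧ ∀ x, g (x + h) = μ * g x := by
    intro g
    simp only [W, Submodule.mem_inf, LinearMap.mem_ker, funext_iff]
    simp [T_apply, sub_eq_zero]
  have hinv : ∀ g ∈ W, T u g ∈ W := by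
    intro g hg
    rw [hW] at hg ⊢
    refine ⟨hV _ _ hg.1, fun x => ?_⟩
    rw [T_apply, T_apply, ← hg.2, add_right_comm]
  have : FiniteDimensional ℂ W := Submodule.finiteDimensional_inf_left _ _
  have : Nontrivial W :=
    ⟨⟨g₀, (hW _).2 ⟨hg₀, hg₀e⟩⟩, 0, fun h => hne (congrArg Subtype.val h)⟩
  obtain ⟨α, hα⟩ := Module.End.exists_eigenvalue (K := ℂ) (V := W) ((T u).restrict hinv)
  obtain ⟨g, hg⟩ := hα.exists_hasEigenvector
  have h1 := (hW _).1 g.2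
  refine ⟨α, g, h1.1, fun h => hg.2 (Subtype.ext h), h1.2, fun x => ?_⟩
  have := congrFun (congrArg Subtype.val hg.apply_eq_smul) x
  simpa [T_apply] using this

theorem EV_finite {d : ℕ} (V : Submodule ℂ (EuclideanSpace ℝ (Fin d) → ℂ))
    [FiniteDimensional ℂ V] (hV : ∀ h, ∀ g ∈ V, T h g ∈ V)
    (h : EuclideanSpace ℝ (Fin d)) : {μ | EV V h μ}.Finite := by
  refine (Module.End.finite_hasEigenvalue ((T h).restrict (hV h))).subset ?_
  rintro μ ⟨g, hg, hne, he⟩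
  refine Module.End.hasEigenvalue_of_hasEigenvector (x := ⟨g, hg⟩) ?_
  rw [Module.End.hasEigenvector_iff, Module.End.mem_eigenspace_iff]
  refine ⟨Subtype.ext (funext fun x => ?_), fun h => hne (congrArg Subtype.val h)⟩
  simp [T_apply, he]

theorem EV_ne {d : ℕ} {V : Submodule ℂ (EuclideanSpace ℝ (Fin d) → ℂ)}
    {h : EuclideanSpace ℝ (Fin d)} {μ : ℂ} (hμ : EV V h μ) : μ ≠ 0 := by
  rintro rfl
  obtain ⟨g, -, hne, he⟩ := hμ
  apply hne
  funext x
  simpa using he (x - h)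

theorem EV_smul {d : ℕ} {V : Submodule ℂ (EuclideanSpace ℝ (Fin d) → ℂ)}
    {h : EuclideanSpace ℝ (Fin d)} {μ : ℂ} (hμ : EV V h μ) (n : ℕ) :
    EV V ((n : ℝ) • h) (μ ^ n) := by
  obtain ⟨g, hg, hne, he⟩ := hμ
  refine ⟨g, hg, hne, fun x => ?_⟩
  induction n generalizing x with
  | zero => simp
  | succ n ih =>
    push_cast
    rw [add_smul, one_smul, ← add_assoc, he, ih]; ring

theorem exists_perp {d : ℕ} (hd : 2 ≤ d) (h : EuclideanSpace ℝ (Fin d)) :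
    ∃ v : EuclideanSpace ℝ (Fin d), ‖v‖ = 1 ∧ inner ℝ h v = 0 := by
  have h1 := Submodule.finrank_add_finrank_orthogonal (ℝ ∙ h)
  have h2 : Module.finrank ℝ (ℝ ∙ h) ≤ 1 := (finrank_span_le_card _).trans (by simp)
  rw [finrank_euclideanSpace_fin] at h1
  have : Nontrivial (ℝ ∙ h)ᗮ := Module.nontrivial_of_finrank_pos (R := ℝ) (by omega)
  obtain ⟨v, hv⟩ := exists_norm_eq ((ℝ ∙ h)ᗮ) zero_le_one
  exact ⟨v, by simpa using hv, Submodule.mem_orthogonal_singleton_iff_inner_right.1 v.2⟩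

theorem exists_sub {d : ℕ} (hd : 2 ≤ d) (h : EuclideanSpace ℝ (Fin d)) (r : ℝ) (hr : ‖h‖ ≤ r) :
    ∃ u w : EuclideanSpace ℝ (Fin d), ‖u‖ = r ∧ ‖w‖ = r ∧ h = u - w := by
  obtain ⟨v, hv, hp⟩ := exists_perp hd h
  have hr0 : 0 ≤ r := (norm_nonneg _).trans hr
  have hs : 0 ≤ r ^ 2 - (‖h‖ / 2) ^ 2 := by nlinarith [norm_nonneg h]
  refine ⟨(1/2 : ℝ) • h + √(r ^ 2 - (‖h‖ / 2) ^ 2) • v,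
    -((1/2 : ℝ) • h) + √(r ^ 2 - (‖h‖ / 2) ^ 2) • v, ?_, ?_, ?_⟩
  · rw [← sq_eq_sq₀ (norm_nonneg _) hr0, norm_add_sq_real, norm_smul, norm_smul,
      inner_smul_left, inner_smul_right, hp, hv, mul_pow, mul_pow, Real.norm_eq_abs,
      Real.norm_eq_abs, sq_abs, sq_abs, Real.sq_sqrt hs]
    ring
  · rw [← sq_eq_sq₀ (norm_nonneg _) hr0, norm_add_sq_real, inner_neg_left, norm_neg,
      norm_smul, norm_smul,
      inner_smul_left, inner_smul_right, hp, hv, mul_pow, mul_pow, Real.norm_eq_abs,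
      Real.norm_eq_abs, sq_abs, sq_abs, Real.sq_sqrt hs]
    ring
  · rw [add_sub_add_right_eq_sub, sub_neg_eq_add, ← add_smul]; norm_num

theorem EV_one {d : ℕ} (hd : 2 ≤ d) (V : Submodule ℂ (EuclideanSpace ℝ (Fin d) → ℂ))
    [FiniteDimensional ℂ V] (hV : ∀ h, ∀ g ∈ V, T h g ∈ V)
    (hA : ∀ A : EuclideanSpace ℝ (Fin d) ≃ₗᵢ[ℝ] EuclideanSpace ℝ (Fin d), ∀ g ∈ V,
      (fun x => g (A x)) ∈ V)
    {h : EuclideanSpace ℝ (Fin d)} {μ : ℂ} (hμ : EV V h μ) : μ = 1 := by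
  obtain ⟨v, hv, -⟩ := exists_perp hd h
  set r := ‖h‖ with hr
  let S : Set ℂ := {μ | EV V (r • v) μ}
  have hS : S.Finite := EV_finite V hV _
  have hSr : ∀ u, ‖u‖ = r → ∀ α, EV V u α → α ∈ S := by
    rintro u hu α ⟨g, hg, hne, he⟩
    have huv : ‖r • v‖ = ‖u‖ := by rw [norm_smul, hv, hu, hr]; simp
    let A := (ℝ ∙ (r • v - u))ᗮ.reflection
    have hAu : A (r • v) = u := Submodule.reflection_sub huv
    refine ⟨fun x => g (A x), hA A g hg, ?_, fun x => ?_⟩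
    · intro h0
      apply hne
      funext x
      have := congrFun h0 (A.symm x)
      simpa using this
    · simp only [map_add, hAu, he]
  let F : Set ℂ := (fun p : ℂ × ℂ => p.1 / p.2) '' (S ×ˢ S)
  have hF : F.Finite := (hS.prod hS).image _
  have hEF : ∀ k : EuclideanSpace ℝ (Fin d), ‖k‖ ≤ r → ∀ ν, EV V k ν → ν ∈ F := by
    intro k hk ν hν
    obtain ⟨u, w, hu, hw, rfl⟩ := exists_sub hd k r hk
    have hν0 := EV_ne hν
    obtain ⟨α, g, hg, hne, h1, h2⟩ := EV_joint V hV hν u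
    have hα : EV V u α := ⟨g, hg, hne, h2⟩
    have hα0 := EV_ne hα
    have hβ : EV V w (α / ν) := by
      refine ⟨g, hg, hne, fun x => ?_⟩
      have h3 := h1 (x + w)
      rw [show x + w + (u - w) = x + u by abel, h2] at h3
      field_simp
      rw [h3]; ring
    refine ⟨(α, α / ν), ⟨hSr u hu _ hα, hSr w hw _ hβ⟩, ?_⟩
    field_simp
  -- pigeonhole
  set n := hF.toFinset.card with hn
  set M := n.factorial with hM
  have hM0 : (M : ℝ) ≠ 0 := by exact_mod_cast n.factorial_ne_zero
  have hMpos : (0 : ℝ) < M := by positivity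
  obtain ⟨ν, g, hg, hne, h1, h2⟩ := EV_joint V hV hμ ((M : ℝ)⁻¹ • h)
  have hν : EV V ((M : ℝ)⁻¹ • h) ν := ⟨g, hg, hne, h2⟩
  have hν0 := EV_ne hν
  have hpow : ∀ k : ℕ, k ≤ M → ν ^ k ∈ F := by
    intro k hk
    refine hEF _ ?_ _ (EV_smul hν k)
    rw [norm_smul, norm_smul, ← hr]
    have : (k : ℝ) ≤ M := by exact_mod_cast hk
    simp only [norm_inv, RCLike.norm_natCast]
    rw [← mul_assoc]
    refine mul_le_of_le_one_left (norm_nonneg _) ?_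
    rw [← div_eq_mul_inv, div_le_one hMpos]; exact this
  obtain ⟨i, hi, j, hj, hij, he⟩ : ∃ i ∈ Finset.range (n + 1), ∃ j ∈ Finset.range (n + 1),
      i ≠ j ∧ ν ^ i = ν ^ j := by
    apply Finset.exists_ne_map_eq_of_card_lt_of_maps_to (t := hF.toFinset)
    · simp [← hn]
    · intro k hk
      simp only [Finset.coe_range, Set.mem_Iio] at hk
      simp only [Set.Finite.coe_toFinset]
      exact hpow k ((Nat.lt_succ_iff.1 hk).trans n.self_le_factorial)
  have hνM : ν ^ M = 1 := by
    have key : ∀ i j : ℕ, i < j → j ≤ n → ν ^ i = ν ^ j → ν ^ M = 1 := by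
      intro i j hij hj he
      have : ν ^ (j - i) = 1 := by
        rw [pow_sub₀ _ hν0 hij.le, he, mul_inv_cancel₀ (pow_ne_zero _ hν0)]
      obtain ⟨c, hc⟩ : (j - i) ∣ M := Nat.dvd_factorial (by omega) (by omega)
      rw [hc, pow_mul, this, one_pow]
    simp only [Finset.mem_range] at hi hj
    rcases lt_or_gt_of_ne hij with hlt | hlt
    · exact key i j hlt (by omega) he
    · exact key j i hlt (by omega) he.symm
  have h3 : ∀ k : ℕ, ∀ x, g (x + (k : ℝ) • ((M : ℝ)⁻¹ • h)) = ν ^ k * g x := by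
    intro k
    induction k with
    | zero => simp
    | succ k ih =>
      intro x
      push_cast
      rw [add_smul, one_smul, ← add_assoc, h2, ih]; ring
  obtain ⟨x, hx⟩ := Function.ne_iff.1 hne
  have h4 := h3 M x
  rw [smul_smul, mul_inv_cancel₀ hM0, one_smul, h1, hνM] at h4
  exact mul_right_cancel₀ hx h4

theorem nil {d : ℕ} (V : Submodule ℂ (EuclideanSpace ℝ (Fin d) → ℂ))
    [FiniteDimensional ℂ V] (hV : ∀ h, ∀ g ∈ V, T h g ∈ V)
    (h1 : ∀ h μ, EV V h μ → μ = 1) (h : EuclideanSpace ℝ (Fin d)) (g) (hg : g ∈ V) :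
    ∃ k : ℕ, ((T h - 1) ^ k) g = 0 := by
  let S : Module.End ℂ V := (T h).restrict (hV h)
  have htop : S.maxGenEigenspace 1 = ⊤ := by
    rw [eq_top_iff, ← Module.End.iSup_maxGenEigenspace_eq_top S]
    refine iSup_le fun μ => ?_
    by_cases hμ : S.HasEigenvalue μ
    · obtain ⟨v, hv⟩ := hμ.exists_hasEigenvector
      have : μ = 1 := by
        refine h1 h μ ⟨v, v.2, fun h => hv.2 (Subtype.ext h), fun x => ?_⟩
        have := congrFun (congrArg Subtype.val hv.apply_eq_smul) x
        simpa [T_apply, S] using this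
      rw [this]
    · have : S.maxGenEigenspace μ = ⊥ := by
        by_contra hc
        exact hμ (Module.End.HasUnifEigenvalue.lt (k := ⊤) one_pos hc)
      rw [this]; exact bot_le
  have hm : (⟨g, hg⟩ : V) ∈ S.maxGenEigenspace 1 := htop ▸ Submodule.mem_top
  obtain ⟨k, hk⟩ := (Module.End.mem_maxGenEigenspace _ _ _).1 hm
  refine ⟨k, ?_⟩
  have : ∀ k : ℕ, ∀ v : V, (((S - (1:ℂ) • 1) ^ k) v : EuclideanSpace ℝ (Fin d) → ℂ)
      = ((T h - 1) ^ k) v := by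
    intro k
    induction k with
    | zero => intro v; simp
    | succ k ih =>
      intro v
      rw [pow_succ, pow_succ, Module.End.mul_apply, Module.End.mul_apply, ih]
      simp [S]
  rw [← this k ⟨g, hg⟩, hk]; rfl

theorem newton {d : ℕ} (h : EuclideanSpace ℝ (Fin d)) (g : EuclideanSpace ℝ (Fin d) → ℂ)
    (K : ℕ) (hK : ((T h - 1) ^ K) g = 0) (n : ℕ) (x) :
    g (x + (n : ℝ) • h) = ∑ j ∈ Finset.range K, (n.choose j : ℂ) * ((T h - 1) ^ j) g x := by
  have hz : ∀ j, K ≤ j → ((T h - 1) ^ j) g = 0 := by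
    intro j hj
    obtain ⟨c, rfl⟩ := Nat.exists_eq_add_of_le hj
    rw [add_comm, pow_add, Module.End.mul_apply, hK, map_zero]
  rw [← T_pow_apply h n g x]
  have e : T h ^ n = ∑ j ∈ Finset.range (n + 1), (n.choose j : ℂ) • (T h - 1) ^ j := by
    conv_lhs => rw [show T h = (T h - 1) + 1 by abel]
    rw [(Commute.one_right _).add_pow]
    refine Finset.sum_congr rfl fun j _ => ?_
    rw [one_pow, mul_one, ← nsmul_eq_mul', Nat.cast_smul_eq_nsmul]
  rw [e, LinearMap.sum_apply, Finset.sum_apply]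
  simp only [LinearMap.smul_apply, Pi.smul_apply, smul_eq_mul]
  rw [Finset.sum_subset (s₂ := Finset.range (n + 1 + K))]
  · symm
    apply Finset.sum_subset
    · intro j; simp; omega
    · intro j _ hj
      rw [hz j (by simpa using hj)]; simp
  · intro j; simp; omega
  · intro j _ hj
    rw [Nat.choose_eq_zero_of_lt (by simpa using hj)]; simp

theorem poly_nat {d : ℕ} (V : Submodule ℂ (EuclideanSpace ℝ (Fin d) → ℂ))
    (hV : ∀ h, ∀ g ∈ V, T h g ∈ V)
    (hn : ∀ h, ∀ g ∈ V, ∃ k : ℕ, ((T h - 1) ^ k) g = 0)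
    (a : EuclideanSpace ℝ (Fin d)) (e : Fin d → EuclideanSpace ℝ (Fin d))
    (s : Finset (Fin d)) : ∀ g ∈ V, ∃ P : MvPolynomial (Fin d) ℂ, ∀ k : Fin d → ℕ,
      g (a + ∑ i ∈ s, (k i : ℝ) • e i) = MvPolynomial.eval (fun i => (k i : ℂ)) P := by
  classical
  induction s using Finset.induction_on with
  | empty => intro g _; exact ⟨MvPolynomial.C (g a), by simp⟩
  | insert i s hi ih =>
    intro g hg
    obtain ⟨K, hK⟩ := hn (e i) g hg
    have hmem : ∀ j : ℕ, ((T (e i) - 1) ^ j) g ∈ V := by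
      intro j
      induction j with
      | zero => simpa
      | succ j ihj =>
        rw [pow_succ', Module.End.mul_apply]
        exact V.sub_mem (hV _ _ ihj) ihj
    choose P hP using fun j : ℕ => ih _ (hmem j)
    refine ⟨∑ j ∈ Finset.range K, MvPolynomial.C ((j.factorial : ℂ)⁻¹) *
      Polynomial.aeval (MvPolynomial.X i) (descPochhammer ℂ j) * P j, fun k => ?_⟩
    rw [Finset.sum_insert hi, add_comm (_ • _), ← add_assoc, newton _ _ K hK, map_sum]
    refine Finset.sum_congr rfl fun j _ => ?_
    rw [hP, map_mul, map_mul, MvPolynomial.eval_C]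
    congr 1
    have : MvPolynomial.eval (fun i => (k i : ℂ))
        (Polynomial.aeval (MvPolynomial.X i) (descPochhammer ℂ j))
        = ((k i).descFactorial j : ℂ) := by
      rw [← descPochhammer_eval_eq_descFactorial, ← MvPolynomial.coe_aeval_eq_eval,
        RingHom.coe_coe, ← Polynomial.aeval_algHom_apply]
      simp [Polynomial.coe_aeval_eq_eval]
    rw [this, Nat.descFactorial_eq_factorial_mul_choose]
    push_cast
    rw [inv_mul_cancel_left₀ (by exact_mod_cast j.factorial_ne_zero)]

theorem poly_orthant {d : ℕ} (f : EuclideanSpace ℝ (Fin d) → ℂ) (hf : Continuous f)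
    (a : EuclideanSpace ℝ (Fin d))
    (hP : ∀ e : Fin d → EuclideanSpace ℝ (Fin d), ∃ P : MvPolynomial (Fin d) ℂ,
      ∀ k : Fin d → ℕ,
      f (a + ∑ i, (k i : ℝ) • e i) = MvPolynomial.eval (fun i => (k i : ℂ)) P) :
    ∃ P : MvPolynomial (Fin d) ℂ, ∀ x : EuclideanSpace ℝ (Fin d), (∀ i, a i ≤ x i) →
      f x = MvPolynomial.eval (fun i => (x i : ℂ)) P := by
  have hsum : ∀ (n : ℕ) (k : Fin d → ℕ),
      a + ∑ i, (k i : ℝ) • ((n : ℝ)⁻¹ • EuclideanSpace.single i (1 : ℝ))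
        = WithLp.toLp 2 (fun i => a i + (k i : ℝ) / n) := by
    intro n k
    ext j
    simp [Finset.sum_apply, Pi.single_apply, div_eq_mul_inv]
  choose P hP using fun n : ℕ => hP (fun i => (n : ℝ)⁻¹ • EuclideanSpace.single i (1 : ℝ))
  simp only [hsum] at hP
  have hQ : ∀ n : ℕ, n ≠ 0 →
      MvPolynomial.bind₁ (fun i => MvPolynomial.C (n : ℂ) * MvPolynomial.X i) (P n) = P 1 := by
    intro n hn
    apply MvPolynomial.funext_set (fun _ => Set.range (fun m : ℕ => (m : ℂ)))
    · intro _; exact Set.infinite_range_of_injective Nat.cast_injective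
    · intro x hx
      choose m hm using fun i => hx i trivial
      obtain rfl : (fun i => (m i : ℂ)) = x := funext hm
      have h1 := hP 1 m
      have h2 := hP n (fun i => n * m i)
      have hn' : (n : ℝ) ≠ 0 := by exact_mod_cast hn
      simp only [Nat.cast_one, div_one] at h1
      simp only [Nat.cast_mul, mul_div_cancel_left₀ _ hn'] at h2
      rw [← h1, h2, MvPolynomial.eval, MvPolynomial.eval₂Hom_bind₁]
      simp
  have hR : ∀ n : ℕ, n ≠ 0 → ∀ k : Fin d → ℕ,
      f (WithLp.toLp 2 (fun i => a i + (k i : ℝ) / n))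
        = MvPolynomial.eval (fun i => (((k i : ℝ) / n : ℝ) : ℂ)) (P 1) := by
    intro n hn k
    have hn' : (n : ℂ) ≠ 0 := by exact_mod_cast hn
    rw [hP, ← hQ n hn, MvPolynomial.eval, MvPolynomial.eval, MvPolynomial.eval₂Hom_bind₁]
    simp [mul_div_cancel₀ _ hn']
  refine ⟨MvPolynomial.bind₁ (fun i => MvPolynomial.X i - MvPolynomial.C (a i : ℂ)) (P 1),
    fun x hx => ?_⟩
  have hlim : ∀ i, Filter.Tendsto (fun n : ℕ => ((⌊(x i - a i) * (n : ℝ)⌋₊ : ℝ) / (n : ℝ)))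
      Filter.atTop (nhds (x i - a i)) := fun i =>
    (tendsto_nat_floor_mul_div_atTop (sub_nonneg.2 (hx i))).comp tendsto_natCast_atTop_atTop
  have hL : Filter.Tendsto (fun n : ℕ => f (WithLp.toLp 2
      (fun i => a i + (⌊(x i - a i) * (n : ℝ)⌋₊ : ℝ) / (n : ℝ)))) Filter.atTop (nhds (f x)) := by
    refine (hf.tendsto x).comp ?_
    have : x = WithLp.toLp 2 (fun i => a i + (x i - a i)) := by ext i; simp
    nth_rewrite 2 [this]
    refine ((PiLp.continuous_toLp 2 _).tendsto _).comp ?_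
    exact tendsto_pi_nhds.2 fun i => (hlim i).const_add _
  have hR' : Filter.Tendsto (fun n : ℕ => MvPolynomial.eval
      (fun i => (((⌊(x i - a i) * (n : ℝ)⌋₊ : ℝ) / (n : ℝ) : ℝ) : ℂ)) (P 1)) Filter.atTop
      (nhds (MvPolynomial.eval (fun i => ((x i - a i : ℝ) : ℂ)) (P 1))) := by
    refine ((MvPolynomial.continuous_eval (P 1)).tendsto _).comp ?_
    exact tendsto_pi_nhds.2 fun i => (Complex.continuous_ofReal.tendsto _).comp (hlim i)
  have := tendsto_nhds_unique (hL.congr' ?_) hR'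
  · rw [this, MvPolynomial.eval, MvPolynomial.eval, MvPolynomial.eval₂Hom_bind₁]
    simp
  · filter_upwards [Filter.eventually_ne_atTop 0] with n hn
    exact hR n hn _

theorem poly_global {d : ℕ} (f : EuclideanSpace ℝ (Fin d) → ℂ)
    (hP : ∀ a : EuclideanSpace ℝ (Fin d), ∃ P : MvPolynomial (Fin d) ℂ,
      ∀ x : EuclideanSpace ℝ (Fin d), (∀ i, a i ≤ x i) →
        f x = MvPolynomial.eval (fun i => (x i : ℂ)) P) :
    ∃ P : MvPolynomial (Fin d) ℂ, ∀ x : EuclideanSpace ℝ (Fin d),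
      f x = MvPolynomial.eval (fun i => (x i : ℂ)) P := by
  choose P hP using hP
  refine ⟨P 0, fun x => ?_⟩
  let a : EuclideanSpace ℝ (Fin d) := WithLp.toLp 2 (fun i => min (x i) 0)
  have : P a = P 0 := by
    apply MvPolynomial.funext_set (fun _ => Set.range (fun m : ℕ => (m : ℂ)))
    · intro _; exact Set.infinite_range_of_injective Nat.cast_injective
    · intro y hy
      choose m hm using fun i => hy i trivial
      obtain rfl : (fun i => (m i : ℂ)) = y := funext hm
      have h1 := hP a (WithLp.toLp 2 (fun i => (m i : ℝ))) (fun i => by simp [a])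
      have h2 := hP 0 (WithLp.toLp 2 (fun i => (m i : ℝ))) (fun i => by simp)
      simpa using h1.symm.trans h2
  rw [← this]
  exact hP a x (fun i => by simp [a])

theorem isom_affine {d : ℕ} (L : EuclideanSpace ℝ (Fin d) → EuclideanSpace ℝ (Fin d))
    (hs : Function.Surjective L) (hi : ∀ x y, ‖L x - L y‖ = ‖x - y‖) :
    ∃ A : EuclideanSpace ℝ (Fin d) →ₗ[ℝ] EuclideanSpace ℝ (Fin d), ∀ x, L x = A x + L 0 := by
  have hiso : Isometry L := Isometry.of_dist_eq fun x y => by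
    rw [dist_eq_norm, dist_eq_norm, hi]
  let e : EuclideanSpace ℝ (Fin d) ≃ᵢ EuclideanSpace ℝ (Fin d) :=
    ⟨Equiv.ofBijective L ⟨hiso.injective, hs⟩, hiso⟩
  let a := e.toRealAffineIsometryEquiv
  refine ⟨a.linearIsometryEquiv.toLinearEquiv.toLinearMap, fun x => ?_⟩
  have := a.map_vadd 0 x
  simp only [vadd_eq_add, add_zero] at this
  exact this

theorem forward {d : ℕ} (p : MvPolynomial (Fin d) ℂ) :
    ∃ W : Submodule ℂ (EuclideanSpace ℝ (Fin d) → ℂ), W.FG ∧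
      ∀ L : EuclideanSpace ℝ (Fin d) → EuclideanSpace ℝ (Fin d),
        Function.Surjective L → (∀ x y, ‖L x - L y‖ = ‖x - y‖) →
        (fun x => MvPolynomial.eval (fun i => (L x i : ℂ)) p) ∈ W := by
  induction p using MvPolynomial.induction_on with
  | C c =>
    refine ⟨Submodule.span ℂ {1}, Submodule.fg_span_singleton _, fun L _ _ => ?_⟩
    rw [Submodule.mem_span_singleton]
    exact ⟨c, by ext x; simp⟩
  | add p q hp hq =>
    obtain ⟨W, hW, h⟩ := hp
    obtain ⟨W', hW', h'⟩ := hq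
    refine ⟨W ⊔ W', hW.sup hW', fun L h1 h2 => ?_⟩
    simp only [map_add]
    exact Submodule.add_mem_sup (h L h1 h2) (h' L h1 h2)
  | mul_X p i hp =>
    obtain ⟨W, hW, h⟩ := hp
    let c : Option (Fin d) → EuclideanSpace ℝ (Fin d) → ℂ := fun o =>
      o.elim 1 (fun j x => (x j : ℂ))
    refine ⟨W * Submodule.span ℂ (Set.range c), hW.mul (Submodule.fg_span (Set.finite_range c)),
      fun L h1 h2 => ?_⟩
    simp only [map_mul, MvPolynomial.eval_X]
    refine Submodule.mul_mem_mul (h L h1 h2) (n := fun x => (L x i : ℂ)) ?_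
    obtain ⟨A, hA⟩ := isom_affine L h1 h2
    have : (fun x => (L x i : ℂ)) = ∑ j, ((A (EuclideanSpace.single j 1) i : ℝ) : ℂ) • c (some j)
        + ((L 0 i : ℝ) : ℂ) • c none := by
      ext x
      have hx : x = ∑ j, x j • EuclideanSpace.single j (1 : ℝ) := by
        ext k; simp [Pi.single_apply]
      rw [hA]
      conv_lhs => rw [hx]
      simp [c, Finset.sum_apply, mul_comm]
    rw [this]
    refine Submodule.add_mem _ (Submodule.sum_mem _ fun j _ => ?_) ?_ <;>
      exact Submodule.smul_mem _ _ (Submodule.subset_span ⟨_, rfl⟩)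

end Loewner


/-- **Loewner's theorem.** For `d ≥ 2`, a continuous `f : ℝ^d → ℂ` is an ordinary
polynomial iff the span of its compositions with surjective isometries of `ℝ^d`
is finite dimensional. -/
theorem loewner_characterization_of_polynomials
    (d : ℕ) (hd : 2 ≤ d)
    (f : EuclideanSpace ℝ (Fin d) → ℂ) (hf : Continuous f) :
    (∃ p : MvPolynomial (Fin d) ℂ,
        ∀ x : EuclideanSpace ℝ (Fin d),
          f x = MvPolynomial.eval (fun i => (x i : ℂ)) p) ↔
      FiniteDimensional ℂ
        (Submodule.span ℂ
          {g : EuclideanSpace ℝ (Fin d) → ℂ |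
            ∃ L : EuclideanSpace ℝ (Fin d) → EuclideanSpace ℝ (Fin d),
              Function.Surjective L ∧
              (∀ x y, ‖L x - L y‖ = ‖x - y‖) ∧
              g = fun x => f (L x)}) := by
  constructor
  · rintro ⟨p, hp⟩
    obtain ⟨W, hW, h⟩ := Loewner.forward p
    have : FiniteDimensional ℂ W := Module.Finite.iff_fg.2 hW
    refine Submodule.finiteDimensional_of_le (S₂ := W) (Submodule.span_le.2 ?_)
    rintro g ⟨L, h1, h2, rfl⟩
    simp only [hp]
    exact h L h1 h2
  · intro hfin
    set V := Submodule.span ℂ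
          {g : EuclideanSpace ℝ (Fin d) → ℂ |
            ∃ L : EuclideanSpace ℝ (Fin d) → EuclideanSpace ℝ (Fin d),
              Function.Surjective L ∧
              (∀ x y, ‖L x - L y‖ = ‖x - y‖) ∧
              g = fun x => f (L x)} with hVdef
    have hinv : ∀ M : EuclideanSpace ℝ (Fin d) → EuclideanSpace ℝ (Fin d),
        Function.Surjective M → (∀ x y, ‖M x - M y‖ = ‖x - y‖) → ∀ g ∈ V,
        (fun x => g (M x)) ∈ V := by
      intro M hM1 hM2 g hg
      have hle : V ≤ V.comap (LinearMap.funLeft ℂ ℂ M) := by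
        rw [hVdef, Submodule.span_le]
        rintro g ⟨L, h1, h2, rfl⟩
        refine Submodule.subset_span ⟨L ∘ M, h1.comp hM1, fun x y => ?_, rfl⟩
        simp only [Function.comp_apply, h2, hM2]
      exact hle hg
    have hV : ∀ h, ∀ g ∈ V, Loewner.T h g ∈ V := fun h g hg =>
      hinv (fun x => x + h) (fun y => ⟨y - h, by simp⟩) (fun x y => by simp) g hg
    have hA : ∀ A : EuclideanSpace ℝ (Fin d) ≃ₗᵢ[ℝ] EuclideanSpace ℝ (Fin d), ∀ g ∈ V,
        (fun x => g (A x)) ∈ V := fun A g hg =>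
      hinv A A.surjective (fun x y => by rw [← map_sub, A.norm_map]) g hg
    have hfV : f ∈ V := Submodule.subset_span ⟨id, Function.surjective_id, fun _ _ => rfl, rfl⟩
    have h1 : ∀ h μ, Loewner.EV V h μ → μ = 1 := fun h μ hμ => Loewner.EV_one hd V hV hA hμ
    exact Loewner.poly_global f fun a => Loewner.poly_orthant f hf a fun e =>
      Loewner.poly_nat V hV (Loewner.nil V hV h1) a e Finset.univ f hfV
end

section
/- Let d ≥ 2 be a natural number and let f : ℝ^d → ℂ be a continuous function. Assume there is a finite-dimensional ℂ-subspace V of the space of continuous functions from ℝ^d to ℂ such that: (i) f ∈ V; (ii) V is translation invariant, i.e. for every h ∈ ℝ^d and every g ∈ V the function x ↦ g(x + h) belongs to V; and (iii) V is invariant under orthogonal transformations, i.e. for every linear isometry equivalence P of ℝ^d and every g ∈ V the function x ↦ g(P x) belongs to V. Then f is an ordinary polynomial. -/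
open Polynomial
lemma oneD (n : ℕ) (g : ℝ → ℂ) (hg : Continuous g)
    (H : ∀ y h : ℝ, ∃ c : ℕ → ℂ, ∀ m : ℕ, g (y + m * h) = ∑ k ∈ Finset.range n, (m.choose k : ℂ) * c k) :
    ∃ p : ℂ[X], p.degree < n ∧ ∀ t : ℝ, g t = p.eval (t : ℂ) := by
  have H1 : ∀ y h : ℝ, h ≠ 0 → ∃ p : ℂ[X], p.degree < n ∧
      ∀ m : ℕ, g (y + m * h) = p.eval ((y + m * h : ℝ) : ℂ) := by
    intro y h hh
    obtain ⟨c, hc⟩ := H y h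
    refine ⟨∑ k ∈ Finset.range n, C (c k / (k.factorial : ℂ)) *
      (descPochhammer ℂ k).comp (C (1/(h:ℂ)) * X + C (- (y:ℂ)/h)), ?_, ?_⟩
    · rw [← Polynomial.mem_degreeLT]
      refine Submodule.sum_mem _ fun k hk => ?_
      rw [Polynomial.mem_degreeLT]
      have hk' := Finset.mem_range.mp hk
      have hl : (C (1/(h:ℂ)) * X + C (- (y:ℂ)/h)).natDegree ≤ 1 := by compute_degree
      have h2 : (C (c k / (k.factorial : ℂ)) *
        (descPochhammer ℂ k).comp (C (1/(h:ℂ)) * X + C (- (y:ℂ)/h))).natDegree ≤ k := by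
        refine (natDegree_C_mul_le _ _).trans (natDegree_comp_le.trans ?_)
        rw [descPochhammer_natDegree]
        nlinarith
      refine (degree_le_of_natDegree_le h2).trans_lt ?_
      exact_mod_cast hk'
    · intro m
      rw [hc, eval_finsetSum]
      refine Finset.sum_congr rfl fun k _ => ?_
      have hh' : (h:ℂ) ≠ 0 := by exact_mod_cast hh
      have e : (C (1/(h:ℂ)) * X + C (- (y:ℂ)/h)).eval ((y + m * h : ℝ) : ℂ) = (m:ℂ) := by
        simp
        field_simp
        ring
      rw [eval_mul, eval_C, eval_comp, e, descPochhammer_eval_eq_descFactorial,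
        Nat.descFactorial_eq_factorial_mul_choose]
      have : (k.factorial : ℂ) ≠ 0 := by exact_mod_cast k.factorial_ne_zero
      push_cast
      field_simp
  obtain ⟨p, hp, hpe⟩ := H1 0 1 one_ne_zero
  refine ⟨p, hp, ?_⟩
  have hq : ∀ q : ℚ, g (q:ℝ) = p.eval ((q:ℝ) : ℂ) := by
    intro q
    have hb : (q.den : ℝ) ≠ 0 := by exact_mod_cast q.den_nz
    obtain ⟨p', hp', hpe'⟩ := H1 (-(q.num.natAbs : ℝ)) (1 / (q.den:ℝ)) (by positivity)
    have hpp : p' = p := by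
      apply Polynomial.eq_of_infinite_eval_eq
      refine Set.Infinite.mono ?_ (Set.infinite_range_of_injective (Nat.cast_injective (R := ℂ)))
      rintro _ ⟨k, rfl⟩
      have h1 := hpe k
      have h2 := hpe' ((q.num.natAbs + k) * q.den)
      have e : -(q.num.natAbs : ℝ) + (((q.num.natAbs + k) * q.den : ℕ) : ℝ) * (1 / (q.den:ℝ)) = k := by
        rw [Nat.cast_mul, Nat.cast_add]; field_simp; ring
      rw [e] at h2
      simp only [zero_add, mul_one] at h1
      rw [h1] at h2
      simpa using h2.symm
    subst hpp
    have hnn : 0 ≤ (q.num.natAbs : ℤ) * q.den + q.num := by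
      have : (1:ℤ) ≤ q.den := by exact_mod_cast q.den_pos
      have h3 : -q.num ≤ (q.num.natAbs : ℤ) := by omega
      nlinarith [Int.natCast_nonneg q.num.natAbs]
    obtain ⟨m, hm⟩ := Int.eq_ofNat_of_zero_le hnn
    have e : -(q.num.natAbs : ℝ) + m * (1 / (q.den:ℝ)) = q := by
      have : (m:ℝ) = (q.num.natAbs : ℝ) * q.den + q.num := by
        have h4 := congrArg (Int.cast (R := ℝ)) hm
        push_cast at h4
        simpa using h4.symm
      rw [this]
      have : (q:ℝ) = q.num / q.den := by exact_mod_cast (Rat.num_div_den q).symm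
      rw [this]; field_simp; ring
    have := hpe' m
    rwa [e] at this
  have := Continuous.ext_on (Rat.isDenseEmbedding_coe_real.dense) hg
    (g := fun t : ℝ => p.eval (t:ℂ)) (by fun_prop) (by rintro _ ⟨q, rfl⟩; exact hq q)
  exact fun t => congrFun this t

lemma multiD {d : ℕ} (n : ℕ) (s : Finset (Fin d)) : ∀ (F : (Fin d → ℝ) → ℂ)
    (_ : ∀ x i, ∃ p : ℂ[X], p.degree < (n+1 : ℕ) ∧ ∀ t : ℝ, F (Function.update x i t) = p.eval (t:ℂ))
    (_ : ∀ x y, (∀ i ∈ s, x i = y i) → F x = F y),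
    ∃ p : MvPolynomial (Fin d) ℂ, ∀ x, F x = MvPolynomial.eval (fun i => (x i : ℂ)) p := by
  classical
  induction s using Finset.induction_on with
  | empty =>
    intro F _ h
    exact ⟨MvPolynomial.C (F 0), fun x => by simpa using h x 0 (by simp)⟩
  | insert i s his ih =>
    intro F hF hs
    have := fun j : ℕ => ih (fun x => F (Function.update x i j)) ?_ ?_
    · choose P hP using this
      refine ⟨∑ j ∈ Finset.range (n+1), P j *
        Polynomial.aeval (MvPolynomial.X i) (Lagrange.basis (Finset.range (n+1)) (fun j : ℕ => (j:ℂ)) j), ?_⟩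
      intro x
      obtain ⟨p, hp, hpe⟩ := hF x i
      have h1 := Lagrange.eq_interpolate (s := Finset.range (n+1)) (v := fun j : ℕ => (j:ℂ)) (f := p)
        (Nat.cast_injective.injOn) (by simpa using hp)
      have h2 := hpe (x i)
      rw [Function.update_eq_self] at h2
      rw [h2]
      conv_lhs => rw [h1]
      rw [Lagrange.interpolate_apply, eval_finsetSum, map_sum]
      refine Finset.sum_congr rfl fun j _ => ?_
      rw [eval_mul, eval_C, map_mul, ← hP]
      have h3 := hpe j
      simp only [Complex.ofReal_natCast] at h3
      rw [h3]
      congr 1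
      generalize Lagrange.basis (Finset.range (n+1)) (fun j : ℕ => (j:ℂ)) j = q
      rw [← MvPolynomial.aeval_eq_eval, ← Polynomial.aeval_algHom_apply]
      simp
    · intro x k
      by_cases hk : k = i
      · subst hk
        refine ⟨C (F (Function.update x k j)), ?_, ?_⟩
        · exact lt_of_le_of_lt degree_C_le (by exact_mod_cast Nat.succ_pos n)
        · intro t; simp
      · obtain ⟨p, hp, hpe⟩ := hF (Function.update x i j) k
        refine ⟨p, hp, fun t => ?_⟩
        rw [← hpe, Function.update_comm hk]
    · intro x y hxy
      apply hs
      intro k hk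
      by_cases hki : k = i
      · subst hki; simp
      · simpa [hki] using hxy k (by simpa [hki] using hk)

abbrev EE (d : ℕ) := EuclideanSpace ℝ (Fin d)

lemma commonEigen {W : Type*} [AddCommGroup W] [Module ℂ W] [FiniteDimensional ℂ W] {ι : Type*}
    (T : ι → Module.End ℂ W) (hc : ∀ i j, Commute (T i) (T j)) (i : ι) (μ : ℂ)
    (hμ : (T i).HasEigenvalue μ) :
    ∃ (v : W) (χ : ι → ℂ), v ≠ 0 ∧ χ i = μ ∧ ∀ j, T j v = χ j • v := by
  let S : Set (Submodule ℂ W) := {U | U ≠ ⊥ ∧ (∀ j, ∀ u ∈ U, T j u ∈ U) ∧ U ≤ (T i).eigenspace μ}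
  have hS : S.Nonempty := by
    refine ⟨(T i).eigenspace μ, hμ, ?_, le_rfl⟩
    intro j u hu
    rw [Module.End.mem_eigenspace_iff] at hu ⊢
    have : T i (T j u) = T j (T i u) := LinearMap.congr_fun (hc i j) u
    rw [this, hu, map_smul]
  obtain ⟨U, hU, hmin⟩ := (wellFounded_lt (α := Submodule ℂ W)).has_min S hS
  obtain ⟨hU0, hUi, hUe⟩ := hU
  have key : ∀ j, ∃ c : ℂ, ∀ u ∈ U, T j u = c • u := by
    intro j
    have : Nontrivial U := Submodule.nontrivial_iff_ne_bot.mpr hU0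
    obtain ⟨c, hcj⟩ := Module.End.exists_eigenvalue ((T j).restrict (hUi j))
    obtain ⟨w, hw⟩ := hcj.exists_hasEigenvector
    have hw1 := hw.apply_eq_smul
    refine ⟨c, ?_⟩
    have hmem : U ⊓ (T j).eigenspace c ∈ S := by
      refine ⟨?_, ?_, inf_le_left.trans hUe⟩
      · rw [Submodule.ne_bot_iff]
        refine ⟨w, ⟨w.2, ?_⟩, ?_⟩
        · rw [SetLike.mem_coe, Module.End.mem_eigenspace_iff]
          exact congrArg Subtype.val hw1
        · simpa using hw.2
      · rintro k u ⟨hu, hu2⟩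
        refine ⟨hUi k u hu, ?_⟩
        rw [SetLike.mem_coe, Module.End.mem_eigenspace_iff] at hu2 ⊢
        have : T j (T k u) = T k (T j u) := LinearMap.congr_fun (hc j k) u
        rw [this, hu2, map_smul]
    have hnot := hmin _ hmem
    have heq : U ⊓ (T j).eigenspace c = U := by
      by_contra hne
      exact hnot (lt_of_le_of_ne inf_le_left hne)
    intro u hu
    rw [← heq] at hu
    exact Module.End.mem_eigenspace_iff.mp hu.2
  choose χ hχ using key
  obtain ⟨v, hv, hv0⟩ := (Submodule.ne_bot_iff _).mp hU0
  refine ⟨v, χ, hv0, ?_, fun j => hχ j v hv⟩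
  have h1 := hχ i v hv
  rw [Module.End.mem_eigenspace_iff.mp (hUe hv)] at h1
  exact (smul_left_injective ℂ hv0 h1).symm

lemma evExt {d : ℕ} {W : Type*} [AddCommGroup W] [Module ℂ W]
    (ev : W →ₗ[ℂ] (EE d → ℂ))
    (hinj : ∀ w, ev w = 0 → w = 0)
    {w w' : W} (h : ∀ x, ev w x = ev w' x) : w = w' := by
  rw [← sub_eq_zero]
  apply hinj
  rw [map_sub, sub_eq_zero]
  exact funext h

lemma TT_comm {d : ℕ} {W : Type*} [AddCommGroup W] [Module ℂ W]
    (ev : W →ₗ[ℂ] (EE d → ℂ))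
    (hinj : ∀ w, ev w = 0 → w = 0)
    (T : EE d → Module.End ℂ W)
    (hT : ∀ h w x, ev (T h w) x = ev w (x + h))
    (h k : EE d) : Commute (T h) (T k) := by
  refine LinearMap.ext fun g => evExt ev hinj fun x => ?_
  simp only [Module.End.mul_apply, hT]
  rw [add_right_comm]

lemma TT_pow {d : ℕ} {W : Type*} [AddCommGroup W] [Module ℂ W]
    (ev : W →ₗ[ℂ] (EE d → ℂ))
    (T : EE d → Module.End ℂ W)
    (hT : ∀ h w x, ev (T h w) x = ev w (x + h))
    (h : EE d) (m : ℕ) (g : W) (x : EE d) :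
    ev ((T h ^ m) g) x = ev g (x + m • h) := by
  induction m generalizing x with
  | zero => simp
  | succ m ih =>
    rw [pow_succ', Module.End.mul_apply, hT, ih, succ_nsmul, add_assoc, add_comm h]

lemma TT_eig {d : ℕ} {W : Type*} [AddCommGroup W] [Module ℂ W] [FiniteDimensional ℂ W]
    (ev : W →ₗ[ℂ] (EE d → ℂ))
    (hinj : ∀ w, ev w = 0 → w = 0)
    (hcont : ∀ w, Continuous (ev w))
    (T : EE d → Module.End ℂ W)
    (hT : ∀ h w x, ev (T h w) x = ev w (x + h))
    (hR : ∀ (P : EE d ≃ₗᵢ[ℝ] EE d) (w : W), ∃ w' : W, ∀ x, ev w' x = ev w (P x))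
    (hd : 2 ≤ d) (h : EE d) (μ : ℂ)
    (hμ : (T h).HasEigenvalue μ) : μ = 1 := by
  obtain ⟨v, χ, hv, rfl, hχ⟩ := commonEigen T (TT_comm ev hinj T hT) h μ hμ
  have hχ' : ∀ k x, ev v (x + k) = χ k * ev v x := fun k x => by
    rw [← hT, hχ]; simp
  obtain ⟨x0, hx0⟩ : ∃ x, ev v x ≠ 0 := by
    by_contra! hcon
    exact hv (hinj _ (funext hcon))
  have hχc : Continuous χ := by
    have : χ = fun k => ev v (x0 + k) / ev v x0 := by
      ext k; rw [hχ']; field_simp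
    rw [this]
    exact ((hcont v).comp (continuous_const.add continuous_id)).div_const _
  have hneg : ∀ k, χ (-k) = χ k := by
    intro k
    have hsub : χ '' Metric.sphere 0 ‖k‖ ⊆ {c | (T k).HasEigenvalue c} := by
      rintro _ ⟨l, hl, rfl⟩
      have hl' : ‖k‖ = ‖l‖ := by simpa using hl.symm
      let P : EE d ≃ₗᵢ[ℝ] EE d := (ℝ ∙ (k - l))ᗮ.reflection
      have hP : P k = l := Submodule.reflection_sub hl'
      obtain ⟨w, hw⟩ := hR P v
      refine Module.End.hasEigenvalue_of_hasEigenvector (x := w)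
        (Module.End.hasEigenvector_iff.mpr ⟨?_, ?_⟩)
      · rw [Module.End.mem_eigenspace_iff]
        refine evExt ev hinj fun x => ?_
        rw [hT, hw, map_add, hP, hχ', map_smul, Pi.smul_apply, hw, smul_eq_mul]
      · rintro rfl
        apply hx0
        have := hw (P.symm x0)
        simpa using this.symm
    have hfin : (χ '' Metric.sphere 0 ‖k‖).Finite :=
      (Module.End.finite_hasEigenvalue _).subset hsub
    have hpre : IsPreconnected (χ '' Metric.sphere 0 ‖k‖) := by
      refine (isPreconnected_sphere ?_ 0 ‖k‖).image _ hχc.continuousOn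
      rw [← Module.finrank_eq_rank, finrank_euclideanSpace_fin]
      exact_mod_cast hd
    have hss : (χ '' Metric.sphere 0 ‖k‖).Subsingleton := by
      by_contra hns
      exact hpre.infinite_of_nontrivial (Set.not_subsingleton_iff.mp hns) hfin
    exact hss ⟨-k, by simp, rfl⟩ ⟨k, by simp, rfl⟩
  have hsq : ∀ k, χ k * χ k = 1 := by
    intro k
    have h1 := hχ' k (x0 + -k)
    rw [hχ' (-k), hneg, neg_add_cancel_right] at h1
    apply mul_right_cancel₀ hx0
    rw [one_mul, mul_assoc]; exact h1.symm
  have h2 := hχ' ((1/2:ℝ) • h) (x0 + (1/2:ℝ) • h)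
  rw [hχ' ((1/2:ℝ) • h) x0, ← mul_assoc, hsq, one_mul, add_assoc, ← add_smul] at h2
  norm_num at h2
  rw [hχ'] at h2
  exact mul_right_cancel₀ hx0 (by rw [h2, one_mul])

lemma TT_nil {d : ℕ} {W : Type*} [AddCommGroup W] [Module ℂ W] [FiniteDimensional ℂ W]
    (ev : W →ₗ[ℂ] (EE d → ℂ))
    (hinj : ∀ w, ev w = 0 → w = 0)
    (hcont : ∀ w, Continuous (ev w))
    (T : EE d → Module.End ℂ W)
    (hT : ∀ h w x, ev (T h w) x = ev w (x + h))
    (hR : ∀ (P : EE d ≃ₗᵢ[ℝ] EE d) (w : W), ∃ w' : W, ∀ x, ev w' x = ev w (P x))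
    (hd : 2 ≤ d) (h : EE d) :
    (T h - 1) ^ (Module.finrank ℂ W) = 0 := by
  have htop := Module.End.iSup_maxGenEigenspace_eq_top (T h)
  have h1 : (T h).maxGenEigenspace 1 = ⊤ := by
    rw [eq_top_iff, ← htop]
    refine iSup_le fun μ => ?_
    by_cases hμ : (T h).HasEigenvalue μ
    · rw [TT_eig ev hinj hcont T hT hR hd h μ hμ]
    · have : (T h).maxGenEigenspace μ = ⊥ := by
        by_contra hne
        exact hμ (Module.End.HasUnifEigenvalue.lt (k := ⊤) zero_lt_one hne)
      rw [this]; exact bot_le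
  rw [Module.End.maxGenEigenspace_eq_genEigenspace_finrank, Module.End.genEigenspace_nat, LinearMap.ker_eq_top] at h1
  simpa using h1

lemma TT_newton {d : ℕ} {W : Type*} [AddCommGroup W] [Module ℂ W] [FiniteDimensional ℂ W]
    (ev : W →ₗ[ℂ] (EE d → ℂ))
    (hinj : ∀ w, ev w = 0 → w = 0)
    (hcont : ∀ w, Continuous (ev w))
    (T : EE d → Module.End ℂ W)
    (hT : ∀ h w x, ev (T h w) x = ev w (x + h))
    (hR : ∀ (P : EE d ≃ₗᵢ[ℝ] EE d) (w : W), ∃ w' : W, ∀ x, ev w' x = ev w (P x))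
    (hd : 2 ≤ d) (f : W) (x h : EE d) :
    ∃ c : ℕ → ℂ, ∀ m : ℕ, ev f (x + m • h) =
      ∑ k ∈ Finset.range (Module.finrank ℂ W + 1), (m.choose k : ℂ) * c k := by
  have hnil := TT_nil ev hinj hcont T hT hR hd h
  set N := T h - 1 with hN
  refine ⟨fun k => ev ((N ^ k) f) x, fun m => ?_⟩
  have hTN : T h = N + 1 := by rw [hN]; abel
  have e : T h ^ m = ∑ k ∈ Finset.range (Module.finrank ℂ W + 1), (m.choose k : ℂ) • N ^ k := by
    rw [hTN, (Commute.one_right N).add_pow]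
    have e1 : ∀ k, N ^ k * 1 ^ (m - k) * ((m.choose k : ℕ) : Module.End ℂ W) = (m.choose k : ℂ) • N ^ k := by
      intro k
      rw [one_pow, mul_one, ← nsmul_eq_mul', Nat.cast_smul_eq_nsmul]
    simp only [e1]
    rw [Finset.sum_subset (Finset.range_mono (show m + 1 ≤ m + Module.finrank ℂ W + 1 by omega)),
      ← Finset.sum_subset (Finset.range_mono (show Module.finrank ℂ W + 1 ≤ m + Module.finrank ℂ W + 1 by omega))]
    · intro k _ hk
      rw [pow_eq_zero_of_le (by simp at hk; omega) hnil, smul_zero]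
    · intro k _ hk
      rw [Nat.choose_eq_zero_of_lt (by simp at hk; omega)]; simp
  rw [← TT_pow ev T hT, e]
  simp [LinearMap.sum_apply]


/-- If a continuous `f : ℝ^d → ℂ` (`d ≥ 2`) belongs to a finite-dimensional
subspace of `C(ℝ^d, ℂ)` that is invariant under translations and under
orthogonal transformations, then `f` is an ordinary polynomial. -/
theorem polynomial_of_mem_finiteDimensional_translation_orthogonal_invariant
    (d : ℕ) (hd : 2 ≤ d)
    (f : C(EuclideanSpace ℝ (Fin d), ℂ))
    (V : Submodule ℂ C(EuclideanSpace ℝ (Fin d), ℂ))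
    (hVfin : FiniteDimensional ℂ V)
    (hfV : f ∈ V)
    (htrans : ∀ (h : EuclideanSpace ℝ (Fin d)),
      ∀ g ∈ V, g.comp ⟨fun x => x + h, by continuity⟩ ∈ V)
    (horth : ∀ (P : EuclideanSpace ℝ (Fin d) ≃ₗᵢ[ℝ] EuclideanSpace ℝ (Fin d)),
      ∀ g ∈ V, g.comp ⟨fun x => P x, P.continuous⟩ ∈ V) :
    ∃ p : MvPolynomial (Fin d) ℂ,
      ∀ x : EuclideanSpace ℝ (Fin d),
        f x = MvPolynomial.eval (fun i => (x i : ℂ)) p := by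
  
  classical
  let ev : V →ₗ[ℂ] (EE d → ℂ) :=
    { toFun := fun g => g.1
      map_add' := fun _ _ => rfl
      map_smul' := fun _ _ => rfl }
  let T : EE d → Module.End ℂ V := fun h =>
    { toFun := fun g => ⟨g.1.comp ⟨fun x => x + h, by continuity⟩, htrans h g.1 g.2⟩
      map_add' := fun _ _ => rfl
      map_smul' := fun _ _ => rfl }
  have key := TT_newton (W := V) ev
    (fun w hw => Subtype.ext (ContinuousMap.ext fun x => congrFun hw x)) (fun w => w.1.continuous)
    T (fun _ _ _ => rfl) (fun P w => ⟨⟨_, horth P w.1 w.2⟩, fun _ => rfl⟩) hd ⟨f, hfV⟩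
  obtain ⟨p, hp⟩ := multiD (Module.finrank ℂ V) Finset.univ (fun x => f (WithLp.toLp 2 x)) (by
    intro x i
    apply oneD
    · apply f.continuous.comp
      exact (PiLp.continuous_toLp 2 _).comp (continuous_const.update i continuous_id)
    · intro y h
      obtain ⟨c, hc⟩ := key (WithLp.toLp 2 (Function.update x i y)) (EuclideanSpace.single i h)
      refine ⟨c, fun m => ?_⟩
      rw [← hc]
      change f _ = f _
      congr 1
      ext j
      by_cases hj : j = i
      · subst hj; simp
      · simp [hj]) (by
    intro x y hxy
    have : x = y := funext fun i => hxy i (Finset.mem_univ i)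
    rw [this])
  exact ⟨p, fun x => hp x⟩
end
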